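/- arXiv:1402.2500 — 2 statements merged into one kernel-verified Lean document; each statement's English description precedes it below -/
import Mathlib

section
/- Let (W,T) be a dual Coxeter system of finite rank, let c be a parabolic Coxeter element, and let W_c = ⟨t1,…,tn⟩ for any reduced reflection factorization c = t1⋯tn. Then Red_T(c) = Red_{T'}(c), where T' = W_c ∩ T: every minimal-length factorization of c into reflections uses only reflections lying in W_c. -/
/-- The reflection length `ℓ_T` of `w`: the minimal length of a factorization of `w`
into reflections. -/
noncomputable def reflLength {B : Type*} {W : Type*} [Group W] {M : CoxeterMatrix B}
    (cs : CoxeterSystem M W) (w : W) : ℕ :=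
  sInf {n | ∃ l : List W, (∀ t ∈ l, cs.IsReflection t) ∧ l.prod = w ∧ l.length = n}

/-- `Red T' w`: the set of minimal-length factorizations of `w` into elements of `T'`. -/
def Red {W : Type*} [Group W] (T' : Set W) (w : W) : Set (List W) :=
  {l | (∀ t ∈ l, t ∈ T') ∧ l.prod = w ∧
    ∀ l' : List W, (∀ t ∈ l', t ∈ T') → l'.prod = w → l.length ≤ l'.length}

namespace CoxeterMatrix

open Polynomial.Chebyshev in
/-- If `f y = g x = -2 cos (π / m)`, then the product of the reflections `(f, x)` and `(g, y)` has
order dividing `m`. -/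
theorem reflection_mul_reflection_pow_eq_one {V : Type*} [AddCommGroup V] [Module ℝ V] {x y : V}
    {f g : Module.Dual ℝ V} (hf : f x = 2) (hg : g y = 2) {m : ℕ} (hm : m ≠ 1)
    (hfy : f y = -2 * Real.cos (Real.pi / m)) (hgx : g x = -2 * Real.cos (Real.pi / m)) :
    (Module.reflection hf * Module.reflection hg) ^ m = 1 := by
  obtain rfl | rfl | hm3 : m = 0 ∨ m = 2 ∨ 3 ≤ m := by omega
  · simp
  · have hfy : f y = 0 := by simp [hfy]
    have hgx : g x = 0 := by simp [hgx]
    ext z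
    simp only [pow_two, LinearEquiv.mul_apply, Module.reflection_apply, map_sub, map_smul, hf, hg,
      hfy, hgx, LinearEquiv.coe_one, id_eq]
    match_scalars <;> ring
  · set θ : ℝ := 2 * Real.pi / m with hθ
    have hm0 : (0 : ℝ) < m := by positivity
    have hm0' : (m : ℝ) ≠ 0 := hm0.ne'
    have hmθ : m * θ = 2 * Real.pi := by rw [hθ]; field_simp
    have hsin : Real.sin θ ≠ 0 := by
      refine (Real.sin_pos_of_pos_of_lt_pi (by positivity) ?_).ne'
      rw [hθ, div_lt_iff₀ hm0]
      have : (3 : ℝ) ≤ m := by exact_mod_cast hm3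
      nlinarith [Real.pi_pos]
    have ht : 2 * Real.cos θ = f y * g x - 2 := by
      rw [hfy, hgx, hθ, mul_div_assoc, Real.cos_two_mul]
      ring
    have hS (k : ℤ) : (S ℝ k).eval (2 * Real.cos θ) = Real.sin ((k + 1) * θ) / Real.sin θ := by
      rw [eq_div_iff hsin, S_two_mul_real_cos]
    have hcoeff : (S ℝ (((m : ℤ) - 2) / 2)).eval (2 * Real.cos θ) *
          ((S ℝ (((m : ℤ) - 1) / 2)).eval (2 * Real.cos θ) +
            (S ℝ (((m : ℤ) - 3) / 2)).eval (2 * Real.cos θ)) = 0 ∧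
        (S ℝ (((m : ℤ) - 1) / 2)).eval (2 * Real.cos θ) *
          ((S ℝ ((m : ℤ) / 2)).eval (2 * Real.cos θ) +
            (S ℝ (((m : ℤ) - 2) / 2)).eval (2 * Real.cos θ)) = 0 := by
      obtain ⟨k, hk | hk⟩ := Nat.even_or_odd' m
      · have hkθ : k * θ = Real.pi := by
          rw [hk] at hmθ
          push_cast at hmθ
          linarith
        have h0 : (S ℝ ((k : ℤ) - 1)).eval (2 * Real.cos θ) = 0 := by
          rw [hS]
          push_cast
          rw [sub_add_cancel, hkθ]
          simp
        rw [show ((m : ℤ) - 2) / 2 = k - 1 by omega, show ((m : ℤ) - 1) / 2 = k - 1 by omega, h0]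
        simp
      · have hkθ : (k + 1) * θ = 2 * Real.pi - k * θ := by
          rw [hk] at hmθ
          push_cast at hmθ
          linarith
        have h0 : (S ℝ (k : ℤ)).eval (2 * Real.cos θ) +
            (S ℝ ((k : ℤ) - 1)).eval (2 * Real.cos θ) = 0 := by
          rw [hS, hS]
          push_cast
          rw [sub_add_cancel, hkθ, Real.sin_two_pi_sub]
          ring
        rw [show ((m : ℤ) - 2) / 2 = k - 1 by omega, show ((m : ℤ) - 1) / 2 = k by omega,
          show ((m : ℤ) - 3) / 2 = k - 1 by omega, show (m : ℤ) / 2 = k by omega, h0]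
        simp
    ext z
    rw [Module.reflection_mul_reflection_pow_apply hf hg m z _ ht, hcoeff.1, hcoeff.2]
    simp

/-- The simple coroots of the geometric representation on `B →₀ ℝ`. -/
noncomputable def simpleCoroot {B : Type*} (M : CoxeterMatrix B) (i : B) :
    Module.Dual ℝ (B →₀ ℝ) :=
  Finsupp.linearCombination ℝ fun j => -2 * Real.cos (Real.pi / M i j)

theorem simpleCoroot_single {B : Type*} (M : CoxeterMatrix B) (i j : B) :
    M.simpleCoroot i (Finsupp.single j 1) = -2 * Real.cos (Real.pi / M i j) := by
  simp [simpleCoroot]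

theorem simpleCoroot_single_self {B : Type*} (M : CoxeterMatrix B) (i : B) :
    M.simpleCoroot i (Finsupp.single i 1) = 2 := by
  simp [simpleCoroot_single]

theorem isLiftable_reflection {B : Type*} (M : CoxeterMatrix B) :
    M.IsLiftable fun i => Module.reflection (M.simpleCoroot_single_self i) := by
  intro i j
  by_cases hij : i = j
  · subst hij
    ext1 z
    simpa using Module.involutive_reflection (M.simpleCoroot_single_self i) z
  · refine reflection_mul_reflection_pow_eq_one _ _ (M.off_diagonal i j hij)
      (M.simpleCoroot_single i j) ?_
    rw [simpleCoroot_single, M.symmetric]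

end CoxeterMatrix

namespace CoxeterSystem

variable {B W : Type*} [Group W] {M : CoxeterMatrix B} (cs : CoxeterSystem M W)

/-- A simple reflection is not a product of other simple reflections. -/
theorem simple_ne_wordProd {i : B} {ω : List B} (hi : i ∉ ω) : cs.simple i ≠ cs.wordProd ω := by
  set ρ := cs.lift ⟨_, M.isLiftable_reflection⟩ with hρ
  have hs (j : B) (v : B →₀ ℝ) :
      ρ (cs.simple j) v = v - M.simpleCoroot j v • Finsupp.single j 1 := by
    rw [hρ, lift_apply_simple, Module.reflection_apply]
  have key (v : B →₀ ℝ) : ρ (cs.wordProd ω) v i = v i := by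
    induction ω generalizing v with
    | nil => simp
    | cons j ω ih =>
      simp only [List.mem_cons, not_or] at hi
      rw [wordProd_cons, map_mul, LinearEquiv.mul_apply, hs]
      simp [ih hi.2, hi.1]
  intro h
  have := key (Finsupp.single i 1)
  rw [← h, hs, M.simpleCoroot_single_self] at this
  norm_num at this

open Classical in
/-- The map `(t, z) ↦ (s t s⁻¹, z + [t = s])` on `W × ZMod 2`. -/
noncomputable def conjFlip {W : Type*} [Group W] (s : W) : Function.End (W × ZMod 2) :=
  fun p => (s * p.1 * s⁻¹, p.2 + if p.1 = s then 1 else 0)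

open Classical in
theorem conjFlip_apply {W : Type*} [Group W] (s : W) (p : W × ZMod 2) :
    conjFlip s p = (s * p.1 * s⁻¹, p.2 + if p.1 = s then 1 else 0) := rfl

open Classical in
theorem isLiftable_conjFlip : M.IsLiftable fun i => conjFlip (cs.simple i) := by
  intro i j
  set a := cs.simple i
  set b := cs.simple j
  set r := a * b with hr
  have ha : a⁻¹ = a := cs.inv_simple i
  have hb : b⁻¹ = b := cs.inv_simple j
  have hconj (k : ℕ) : r ^ k * b = b * (r ^ k)⁻¹ := by
    have h : SemiconjBy b r⁻¹ r := by
      rw [SemiconjBy, hr, mul_inv_rev, ha, hb, mul_assoc a b b, cs.simple_mul_simple_self,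
        mul_one, cs.simple_mul_simple_cancel_left]
    rw [← inv_pow]
    exact (h.pow_right k).eq.symm
  have hb_conj (k : ℕ) : (r ^ k)⁻¹ * b * r ^ k = b * r ^ (2 * k) := by
    rw [mul_assoc, inv_mul_eq_iff_eq_mul, ← mul_assoc, hconj, two_mul, pow_add]
    group
  have key (k : ℕ) (p : W × ZMod 2) : ((conjFlip a * conjFlip b) ^ k) p =
      (r ^ k * p.1 * (r ^ k)⁻¹,
        p.2 + ∑ l ∈ Finset.range (2 * k), if p.1 = b * r ^ l then 1 else 0) := by
    induction k with
    | zero =>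
      simp only [pow_zero, one_mul, inv_one, mul_one, mul_zero, Finset.range_zero,
        Finset.sum_empty, add_zero]
      rfl
    | succ k ih =>
      have hstep (f g : Function.End (W × ZMod 2)) (q : W × ZMod 2) : (f * g) q = f (g q) := rfl
      have h1 : r ^ k * p.1 * (r ^ k)⁻¹ = b ↔ p.1 = b * r ^ (2 * k) := by
        rw [← hb_conj, mul_inv_eq_iff_eq_mul, mul_assoc, eq_inv_mul_iff_mul_eq]
      have h2 : b * (r ^ k * p.1 * (r ^ k)⁻¹) * b⁻¹ = a ↔ p.1 = b * r ^ (2 * k + 1) := by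
        have hbr : b * r ^ (2 * k + 1) = (r ^ k)⁻¹ * (b⁻¹ * (a * b)) * r ^ k := by
          rw [hb, ← hr, pow_succ, ← mul_assoc b (r ^ (2 * k)), ← hb_conj]
          simp only [mul_assoc, ← pow_succ, ← pow_succ']
        rw [hbr]
        constructor <;> intro h
        · rw [← h]
          group
        · rw [h]
          group
      rw [pow_succ', hstep, ih, hstep, conjFlip_apply, conjFlip_apply, mul_add_one,
        Finset.sum_range_succ, Finset.sum_range_succ]
      simp only [h1, h2]
      rw [Prod.mk.injEq]
      refine ⟨?_, by ring⟩
      simp only [pow_succ', hr, mul_inv_rev, mul_assoc]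
  funext p
  rw [key, two_mul, Finset.sum_range_add]
  simp [r, a, b, pow_add, CharTwo.add_self_eq_zero]
  rfl

/-- The parity of the number of occurrences of `t` in the left inversion sequence of a word for
`w`. -/
noncomputable def inversionParity (w t : W) : ZMod 2 :=
  (cs.lift ⟨_, cs.isLiftable_conjFlip⟩ w⁻¹ (t, 0)).2

theorem lift_conjFlip_apply (w t : W) (z : ZMod 2) :
    cs.lift ⟨_, cs.isLiftable_conjFlip⟩ w (t, z) =
      (w * t * w⁻¹, z + cs.inversionParity w⁻¹ t) := by
  induction w using cs.simple_induction_left generalizing t z with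
  | one =>
    rw [inversionParity, inv_inv, map_one]
    simp [Function.End.one_def]
  | mul_simple_left w i ih =>
    have hstep (f g : Function.End (W × ZMod 2)) (q : W × ZMod 2) : (f * g) q = f (g q) := rfl
    rw [inversionParity, inv_inv, map_mul, hstep, hstep, ih, ih t 0, lift_apply_simple,
      conjFlip_apply, conjFlip_apply]
    simp [mul_assoc, add_assoc]

theorem inversionParity_mul (u v t : W) :
    cs.inversionParity (u * v) t =
      cs.inversionParity u t + cs.inversionParity v (u⁻¹ * t * u) := by
  have hstep (f g : Function.End (W × ZMod 2)) (q : W × ZMod 2) : (f * g) q = f (g q) := rfl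
  rw [inversionParity, mul_inv_rev, map_mul, hstep, lift_conjFlip_apply, lift_conjFlip_apply]
  simp

theorem inversionParity_one (t : W) : cs.inversionParity 1 t = 0 := by
  simpa using cs.inversionParity_mul 1 1 t

open Classical in
theorem inversionParity_simple (i : B) (t : W) :
    cs.inversionParity (cs.simple i) t = if t = cs.simple i then 1 else 0 := by
  rw [inversionParity, inv_simple, lift_apply_simple, conjFlip_apply]
  simp

theorem IsReflection.inversionParity_self {cs : CoxeterSystem M W} {t : W}
    (ht : cs.IsReflection t) : cs.inversionParity t t = 1 := by
  obtain ⟨u, i, rfl⟩ := ht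
  have h1 := cs.inversionParity_mul u u⁻¹ (u * cs.simple i * u⁻¹)
  have h2 := cs.inversionParity_mul (u * cs.simple i) u⁻¹ (u * cs.simple i * u⁻¹)
  have h3 := cs.inversionParity_mul u (cs.simple i) (u * cs.simple i * u⁻¹)
  have h4 := cs.inversionParity_simple i (cs.simple i)
  simp only [mul_inv_cancel, inversionParity_one, mul_inv_rev, mul_assoc, inv_mul_cancel_left,
    inv_mul_cancel, mul_one, inv_simple, simple_mul_simple_cancel_left, if_true] at h1 h2 h3 h4
  simp only [mul_assoc]
  rw [h2, h3, h4]
  linear_combination -h1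

theorem mem_leftInvSeq_of_inversionParity_ne_zero {ω : List B} {t : W}
    (h : cs.inversionParity (cs.wordProd ω) t ≠ 0) : t ∈ cs.leftInvSeq ω := by
  induction ω generalizing t with
  | nil => simp [inversionParity_one] at h
  | cons i ω ih =>
    rw [wordProd_cons, inversionParity_mul, inversionParity_simple, inv_simple] at h
    rw [leftInvSeq, List.mem_cons]
    by_cases hti : t = cs.simple i
    · exact Or.inl hti
    · rw [if_neg hti, zero_add] at h
      exact Or.inr (List.mem_map.mpr ⟨_, ih h, by simp [mul_assoc]⟩)

theorem isLeftInversion_iff_inversionParity {w t : W} (ht : cs.IsReflection t) :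
    cs.IsLeftInversion w t ↔ cs.inversionParity w t = 1 := by
  have key (v : W) (hv : cs.inversionParity v t ≠ 0) : cs.IsLeftInversion v t := by
    obtain ⟨ω, hω, rfl⟩ := cs.exists_isReduced v
    exact cs.isLeftInversion_of_mem_leftInvSeq hω (cs.mem_leftInvSeq_of_inversionParity_ne_zero hv)
  refine ⟨fun h => ?_, fun h => key w (by simp [h])⟩
  by_contra hne
  have h0 : cs.inversionParity w t = 0 := by
    revert hne
    generalize cs.inversionParity w t = z
    decide +revert
  refine ht.isLeftInversion_mul_right_iff.mp (key (t * w) ?_) h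
  rw [inversionParity_mul, ht.inversionParity_self, ht.inv, ht.mul_self, one_mul, h0]
  decide

/-- The strong exchange property. -/
theorem exists_eraseIdx_of_isLeftInversion {ω : List B} {t : W}
    (h : cs.IsLeftInversion (cs.wordProd ω) t) :
    ∃ j < ω.length, t * cs.wordProd ω = cs.wordProd (ω.eraseIdx j) := by
  have hmem := cs.mem_leftInvSeq_of_inversionParity_ne_zero (ω := ω) (t := t)
    (by simp [(cs.isLeftInversion_iff_inversionParity h.1).mp h])
  obtain ⟨j, hj, rfl⟩ := List.mem_iff_getElem.mp hmem
  refine ⟨j, by simpa using hj, ?_⟩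
  rw [← List.getD_eq_getElem _ 1 hj, getD_leftInvSeq_mul_wordProd]

/-- A nonempty set of reflections which is closed under conjugation by its elements, and all of
whose elements are inversions of each other, is a singleton. -/
theorem subsingleton_of_inversionParity_eq_one {R : Set W} (hR : ∀ t ∈ R, cs.IsReflection t)
    (hconj : ∀ u ∈ R, ∀ v ∈ R, u⁻¹ * v * u ∈ R)
    (hpar : ∀ u ∈ R, ∀ v ∈ R, cs.inversionParity u v = 1) : R.Subsingleton := by
  have key (ω : List B) : ∀ (i : B) (R : Set W), (∀ u ∈ R, ∀ v ∈ R, u⁻¹ * v * u ∈ R) →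
      (∀ u ∈ R, ∀ v ∈ R, cs.inversionParity u v = 1) →
      cs.wordProd ω * cs.simple i * (cs.wordProd ω)⁻¹ ∈ R → R.Subsingleton := by
    have simple_mem {R : Set W} (hpar : ∀ u ∈ R, ∀ v ∈ R, cs.inversionParity u v = 1) {j : B}
        (hj : cs.simple j ∈ R) : R.Subsingleton := by
      have heq (v : W) (hv : v ∈ R) : v = cs.simple j := by
        by_contra hne
        have := hpar _ hj v hv
        rw [inversionParity_simple, if_neg hne] at this
        exact absurd this (by decide)
      exact fun u hu v hv => (heq u hu).trans (heq v hv).symm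
    induction ω with
    | nil =>
      intro i R _ hpar hmem
      exact simple_mem hpar (j := i) (by simpa using hmem)
    | cons j ω ih =>
      intro i R hconj hpar hmem
      by_cases hj : cs.simple j ∈ R
      · exact simple_mem hpar hj
      let s := cs.simple j
      have hs : s⁻¹ = s := cs.inv_simple j
      have hne {V : W} (hV : V ∈ R) : V ≠ s := by
        rintro rfl
        exact hj hV
      have hsub : {v | s * v * s⁻¹ ∈ R}.Subsingleton := by
        refine ih i _ (fun u hu v hv => ?_) (fun u hu v hv => ?_) ?_
        · have := hconj _ hu _ hv
          rw [Set.mem_ofPred_eq]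
          convert this using 1
          group
        · obtain ⟨U, rfl⟩ : ∃ U, u = s⁻¹ * U * s := ⟨s * u * s⁻¹, by group⟩
          obtain ⟨V, rfl⟩ : ∃ V, v = s⁻¹ * V * s := ⟨s * v * s⁻¹, by group⟩
          have hcancel (X : W) : s * (s⁻¹ * X * s) * s⁻¹ = X := by group
          rw [Set.mem_ofPred_eq, hcancel] at hu hv
          have h0 (X : W) (hX : X ≠ s) : cs.inversionParity s⁻¹ X = 0 := by
            rw [hs, inversionParity_simple, if_neg hX]
          have h1 : s⁻¹ * V * s ≠ s := fun h => hne hv (by simpa [inv_mul_eq_one, eq_comm] using h)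
          rw [mul_assoc, inversionParity_mul, inv_inv, hcancel, inversionParity_mul, hpar U hu V hv,
            inversionParity_simple, if_neg (hne (hconj U hu V hv)), h0 _ h1]
          simp
        · rw [Set.mem_ofPred_eq]
          convert hmem using 1
          simp [wordProd_cons, mul_assoc, s]
      intro u hu v hv
      have := @hsub (s⁻¹ * u * s) (by simpa [mul_assoc] using hu) (s⁻¹ * v * s)
        (by simpa [mul_assoc] using hv)
      simpa using this
  rcases R.eq_empty_or_nonempty with rfl | ⟨u, hu⟩
  · exact Set.subsingleton_empty
  obtain ⟨w, i, rfl⟩ := hR u hu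
  obtain ⟨ω, rfl⟩ := cs.wordProd_surjective w
  exact key ω i R hconj hpar hu

theorem IsReflection.mul_zpow {cs : CoxeterSystem M W} {t t' : W} (ht : cs.IsReflection t)
    (ht' : cs.IsReflection t') (k : ℤ) : t * (t * t') ^ k = (t * t') ^ (-k) * t := by
  have hconj : t * (t * t') ^ k * t⁻¹ = (t * t') ^ (-k) := by
    rw [← conj_zpow, zpow_neg, ← inv_zpow, mul_inv_rev, ht.inv, ht'.inv, ← mul_assoc, ht.mul_self,
      one_mul]
  rw [← hconj, inv_mul_cancel_right]

theorem IsReflection.zpow_mul {cs : CoxeterSystem M W} {t t' : W} (ht : cs.IsReflection t)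
    (ht' : cs.IsReflection t') (k : ℤ) : cs.IsReflection ((t * t') ^ k * t) := by
  have hconj (k l : ℤ) : (t * t') ^ k * ((t * t') ^ l * t) * ((t * t') ^ k)⁻¹ =
      (t * t') ^ (k + l + k) * t := by
    rw [← mul_assoc, mul_assoc _ t, ← zpow_neg, ht.mul_zpow ht', neg_neg, ← mul_assoc, ← zpow_add,
      ← zpow_add]
  obtain ⟨l, rfl | rfl⟩ := Int.even_or_odd' k
  · convert ht.conj ((t * t') ^ l) using 1
    have := hconj l 0
    rw [zpow_zero, one_mul] at this
    rw [this, add_zero, two_mul]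
  · convert (ht'.conj t).conj ((t * t') ^ l) using 1
    rw [ht.inv]
    have := hconj l 1
    rw [zpow_one] at this
    rw [this, add_right_comm, two_mul]

/-- If two distinct reflections `t` and `t'` both decrease the length of `y`, then so does some
power of `t * t'`. -/
theorem exists_zpow_mul_length_lt {y t t' : W} (ht : cs.IsLeftInversion y t)
    (ht' : cs.IsLeftInversion y t') (hne : t ≠ t') :
    ∃ k : ℤ, cs.length ((t * t') ^ k * y) < cs.length y := by
  by_contra! hlen
  set r := t * t' with hr
  have htt : t⁻¹ = t := ht.1.inv
  have htt' : t'⁻¹ = t' := ht'.1.inv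
  have hmul : t * t = 1 := ht.1.mul_self
  have hcomm (k : ℤ) : t * r ^ k = r ^ (-k) * t := ht.1.mul_zpow ht'.1 k
  have hrt (k : ℤ) : (r ^ k * t)⁻¹ = r ^ k * t := by
    rw [mul_inv_rev, htt, ← zpow_neg, hcomm, neg_neg]
  set R : Set W := Set.range fun k : ℤ => r ^ k * t
  have htR : t ∈ R := ⟨0, by simp⟩
  have ht'R : t' ∈ R := ⟨-1, by simp [hr, htt, htt', mul_assoc, hmul]⟩
  have hconj : ∀ u ∈ R, ∀ v ∈ R, u⁻¹ * v * u ∈ R := by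
    rintro _ ⟨k, rfl⟩ _ ⟨l, rfl⟩
    refine ⟨k - l + k, ?_⟩
    dsimp only
    rw [hrt, mul_assoc _ t, ← mul_assoc t, hcomm, mul_assoc (r ^ (-l)), hmul, mul_one,
      ← mul_assoc, ← zpow_add, ← zpow_add, sub_eq_add_neg]
  have hrconj (k l : ℤ) : r ^ k * (r ^ l * t) * (r ^ k)⁻¹ = r ^ (k + l + k) * t := by
    rw [← mul_assoc, mul_assoc _ t, ← zpow_neg, hcomm, neg_neg, ← mul_assoc, ← zpow_add,
      ← zpow_add]
  have hR : ∀ u ∈ R, cs.IsReflection u := by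
    rintro _ ⟨k, rfl⟩
    exact ht.1.zpow_mul ht'.1 k
  have hzero (s : W) (hs : cs.length (s * y) < cs.length y)
      (hsR : ∀ u ∈ R, ∃ k : ℤ, u * s = r ^ k) (u : W) (hu : u ∈ R) :
      cs.inversionParity (s * y) u = 0 := by
    have hnot : ¬ cs.IsLeftInversion (s * y) u := by
      rintro ⟨-, h⟩
      obtain ⟨k, hk⟩ := hsR u hu
      rw [← mul_assoc, hk] at h
      exact absurd (h.trans hs) (hlen k).not_gt
    rw [cs.isLeftInversion_iff_inversionParity (hR u hu)] at hnot
    generalize cs.inversionParity (s * y) u = z at hnot ⊢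
    decide +revert
  have hpar (s : W) (hs : cs.IsLeftInversion y s) (hmem : s ∈ R)
      (hsR : ∀ u ∈ R, ∃ k : ℤ, u * s = r ^ k) (u : W) (hu : u ∈ R) :
      cs.inversionParity s u = cs.inversionParity y u ∧
        cs.inversionParity y (s⁻¹ * u * s) = cs.inversionParity y u := by
    have hu' := hconj s hmem u hu
    have h1 := hzero s hs.2 hsR u hu
    have h2 := hzero s hs.2 hsR _ hu'
    have h3 := cs.inversionParity_mul s s u
    have hss : s⁻¹ * (s⁻¹ * u * s) * s = u := by
      simp only [hs.1.inv, ← mul_assoc, hs.1.mul_self, one_mul]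
      rw [mul_assoc, hs.1.mul_self, mul_one]
    rw [inversionParity_mul] at h1 h2
    rw [hss] at h2
    rw [hs.1.mul_self, inversionParity_one] at h3
    rw [eq_comm, CharTwo.add_eq_zero] at h3
    rw [CharTwo.add_eq_zero] at h1 h2
    exact ⟨h3.trans h2, h1.symm.trans (h3.trans h2)⟩
  have hpar_t := hpar t ht htR (by
    rintro _ ⟨k, rfl⟩
    exact ⟨k, by simp [mul_assoc, hmul]⟩)
  have hpar_t' := hpar t' ht' ht'R (by
    rintro _ ⟨k, rfl⟩
    exact ⟨k + 1, by rw [mul_assoc, zpow_add_one]⟩)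
  have hrR (k : ℤ) (u : W) (hu : u ∈ R) : (r ^ k)⁻¹ * u * r ^ k ∈ R := by
    obtain ⟨l, rfl⟩ := hu
    refine ⟨-k + l + -k, ?_⟩
    dsimp only
    rw [← hrconj, zpow_neg, inv_inv]
  have hr1 (u : W) (hu : u ∈ R) : cs.inversionParity r u = 0 := by
    rw [inversionParity_mul, (hpar_t u hu).1, (hpar_t' _ (hconj t htR u hu)).1, (hpar_t u hu).2,
      CharTwo.add_self_eq_zero]
  have hr2 (u : W) (hu : u ∈ R) : cs.inversionParity r⁻¹ u = 0 := by
    rw [hr, mul_inv_rev, htt, htt', inversionParity_mul, (hpar_t' u hu).1,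
      (hpar_t _ (hconj t' ht'R u hu)).1, (hpar_t' u hu).2, CharTwo.add_self_eq_zero]
  have hrk (k : ℤ) : ∀ u ∈ R, cs.inversionParity (r ^ k) u = 0 := by
    induction k with
    | zero => simp [inversionParity_one]
    | succ k ih =>
      intro u hu
      rw [zpow_add_one, inversionParity_mul, ih u hu, hr1 _ (hrR _ u hu), add_zero]
    | pred k ih =>
      intro u hu
      rw [zpow_sub_one, inversionParity_mul, ih u hu, hr2 _ (hrR _ u hu), add_zero]
  have hparR (k : ℤ) (u : W) (hu : u ∈ R) : cs.inversionParity (r ^ k * t) u =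
      cs.inversionParity y ((r ^ k)⁻¹ * u * r ^ k) := by
    rw [inversionParity_mul, hrk k u hu, zero_add, (hpar_t _ (hrR k u hu)).1]
  have hone (u : W) (hu : u ∈ R) : cs.inversionParity y u = 1 := by
    obtain ⟨k, rfl⟩ := hu
    have h1 := hparR (-k) _ ⟨-k, rfl⟩
    rw [(hR _ ⟨-k, rfl⟩).inversionParity_self] at h1
    rw [inv_mul_cancel_left, hcomm, neg_neg] at h1
    exact h1.symm
  refine hne (cs.subsingleton_of_inversionParity_eq_one hR hconj ?_ htR ht'R)
  rintro _ ⟨k, rfl⟩ u hu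
  exact (hparR k u hu).trans (hone _ (hrR k u hu))

/-- `l` is a factorization of minimal length among all factorizations of `l.prod` into
reflections. -/
def IsReflectionReduced (l : List W) : Prop := l ∈ Red {t | cs.IsReflection t} l.prod

theorem IsReflectionReduced.tail {cs : CoxeterSystem M W} {t : W} {l : List W}
    (h : cs.IsReflectionReduced (t :: l)) : cs.IsReflectionReduced l := by
  refine ⟨fun u hu => h.1 u (List.mem_cons_of_mem _ hu), rfl, fun l' hl' hprod => ?_⟩
  have := h.2.2 (t :: l') (by
    intro u hu
    rcases List.mem_cons.mp hu with rfl | hu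
    · exact h.1 _ List.mem_cons_self
    · exact hl' u hu) (by rw [List.prod_cons, hprod, List.prod_cons])
  simpa using this

theorem IsReflectionReduced.congr {cs : CoxeterSystem M W} {l l' : List W}
    (h : cs.IsReflectionReduced l) (hl' : ∀ t ∈ l', cs.IsReflection t)
    (hprod : l'.prod = l.prod) (hlen : l'.length = l.length) : cs.IsReflectionReduced l' :=
  ⟨hl', rfl, fun l'' hl'' h'' => hlen.trans_le (h.2.2 l'' hl'' (h''.trans hprod))⟩

/-- A nonempty reduced reflection factorization of `w` can be changed, without changing the
subgroup generated by its factors, such that its first factor decreases the length of `w`. -/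
theorem IsReflectionReduced.exists_cons_isLeftInversion {cs : CoxeterSystem M W} {l : List W}
    (h : cs.IsReflectionReduced l) (hl : l ≠ []) :
    ∃ t l', cs.IsReflectionReduced (t :: l') ∧ (t :: l').prod = l.prod ∧
      (t :: l').length = l.length ∧
      Subgroup.closure {u | u ∈ t :: l'} = Subgroup.closure {u | u ∈ l} ∧
      cs.IsLeftInversion l.prod t := by
  obtain ⟨n, hn⟩ : ∃ n, l.length = n := ⟨_, rfl⟩
  induction n generalizing l with
  | zero => exact absurd (List.length_eq_zero_iff.mp hn) hl
  | succ n ih =>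
    obtain ⟨t, l₁, rfl⟩ := List.exists_cons_of_ne_nil hl
    obtain ⟨N, hN⟩ : ∃ N, cs.length l₁.prod = N := ⟨_, rfl⟩
    induction N using Nat.strong_induction_on generalizing t l₁ with
    | _ N ihN =>
      have ht : cs.IsReflection t := h.1 t List.mem_cons_self
      have hty : t * (t :: l₁).prod = l₁.prod := by
        rw [List.prod_cons, ← mul_assoc, ht.mul_self, one_mul]
      by_cases hdesc : cs.length l₁.prod < cs.length (t :: l₁).prod
      · exact ⟨t, l₁, h, rfl, rfl, rfl, ht, by rwa [hty]⟩
      have hty' : cs.IsLeftInversion l₁.prod t := by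
        refine ⟨ht, lt_of_le_of_ne ?_ (ht.length_mul_right_ne _)⟩
        rw [← List.prod_cons]
        exact not_lt.mp hdesc
      have hl₁ : l₁ ≠ [] := by
        rintro rfl
        simpa using hty'.2
      obtain ⟨t', l₂, hred, hprod, hlen, hcl, hinv⟩ := ih h.tail hl₁ (by simpa using hn)
      have ht' : cs.IsReflection t' := hinv.1
      have hz : l₂.prod = t' * l₁.prod := by
        rw [← hprod, List.prod_cons, ← mul_assoc, ht'.mul_self, one_mul]
      have hne : t ≠ t' := by
        rintro rfl
        have := h.2.2 l₂ hred.tail.1 (by rw [hz, List.prod_cons])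
        simp only [List.length_cons] at this hlen
        omega
      obtain ⟨k, hk⟩ := cs.exists_zpow_mul_length_lt hty' hinv hne
      set r := t * t' with hr
      have hb : r ^ k * t' = r ^ (k - 1) * t := by
        rw [zpow_sub_one, mul_assoc, hr, mul_inv_rev, ht.inv, ht'.inv, mul_assoc, ht.mul_self,
          mul_one]
      have hab : r ^ k * t * (r ^ k * t') = r := by
        rw [mul_assoc, ← mul_assoc t, hr, ht.mul_zpow ht', mul_assoc, ← mul_assoc, zpow_neg,
          mul_inv_cancel, one_mul]
      have hb_prod : (r ^ k * t' :: l₂).prod = r ^ k * l₁.prod := by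
        rw [List.prod_cons, hz, mul_assoc, ← mul_assoc t', ht'.mul_self, one_mul]
      have hprod₂ : (r ^ k * t :: r ^ k * t' :: l₂).prod = (t :: l₁).prod := by
        rw [List.prod_cons, List.prod_cons, ← mul_assoc, hab, List.prod_cons, ← hprod,
          List.prod_cons, ← mul_assoc]
      have hlen₂ : (r ^ k * t :: r ^ k * t' :: l₂).length = (t :: l₁).length := by
        rw [List.length_cons, List.length_cons, List.length_cons, ← hlen, List.length_cons]
      have hrefl : ∀ u ∈ r ^ k * t :: r ^ k * t' :: l₂, cs.IsReflection u := by
        simp only [List.mem_cons, forall_eq_or_imp]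
        exact ⟨ht.zpow_mul ht' k, hb ▸ ht.zpow_mul ht' _, hred.tail.1⟩
      have hcl₂ : Subgroup.closure {u | u ∈ r ^ k * t :: r ^ k * t' :: l₂} =
          Subgroup.closure {u | u ∈ t :: l₁} := by
        have hcons (u : W) (l : List W) : Subgroup.closure {v | v ∈ u :: l} =
            Subgroup.closure {u} ⊔ Subgroup.closure {v | v ∈ l} := by
          rw [← Subgroup.closure_union]
          congr 1
          ext v
          simp
        rw [hcons, hcons, hcons t, ← hcl, hcons, ← sup_assoc, ← sup_assoc]
        congr 1
        rw [← Subgroup.closure_union, ← Subgroup.closure_union, Set.singleton_union,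
          Set.singleton_union]
        apply le_antisymm <;> rw [Subgroup.closure_le]
        · set K := Subgroup.closure {t, t'}
          have htK : t ∈ K := Subgroup.subset_closure (by simp)
          have htK' : t' ∈ K := Subgroup.subset_closure (by simp)
          have hrK : r ^ k ∈ K := K.zpow_mem (K.mul_mem htK htK') k
          rintro _ (rfl | rfl)
          exacts [K.mul_mem hrK htK, K.mul_mem hrK htK']
        · set K := Subgroup.closure {r ^ k * t, r ^ k * t'}
          have haK : r ^ k * t ∈ K := Subgroup.subset_closure (by simp)
          have hbK : r ^ k * t' ∈ K := Subgroup.subset_closure (by simp)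
          have hrK : r ^ k ∈ K := by
            apply K.zpow_mem
            rw [← hab]
            exact K.mul_mem haK hbK
          rintro _ (rfl | rfl)
          exacts [(K.mul_mem_cancel_left hrK).mp haK, (K.mul_mem_cancel_left hrK).mp hbK]
      obtain ⟨u, l', hu, hu_prod, hu_len, hu_cl, hu_inv⟩ :=
        ihN _ (by rw [← hN, hb_prod]; exact hk) _ _ (h.congr hrefl hprod₂ hlen₂)
          (List.cons_ne_nil _ _) (hlen₂.trans hn) rfl
      rw [hprod₂] at hu_prod hu_inv
      exact ⟨u, l', hu, hu_prod, hu_len.trans hlen₂, hu_cl.trans hcl₂, hu_inv⟩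

/-- All reduced reflection factorizations of a product of distinct simple reflections generate the
same subgroup. -/
theorem IsReflectionReduced.closure_eq {cs : CoxeterSystem M W} {l : List W}
    (h : cs.IsReflectionReduced l) {ω : List B} (hω : ω.Nodup) (hprod : l.prod = cs.wordProd ω) :
    Subgroup.closure {t | t ∈ l} = Subgroup.closure {t | t ∈ ω.map cs.simple} := by
  obtain ⟨n, hn⟩ : ∃ n, ω.length = n := ⟨_, rfl⟩
  induction n generalizing l ω with
  | zero =>
    obtain rfl := List.length_eq_zero_iff.mp hn
    have := h.2.2 [] (by simp) (by simp [hprod])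
    obtain rfl : l = [] := by simpa using this
    rfl
  | succ n ih =>
    have hl : l ≠ [] := by
      rintro rfl
      obtain ⟨i, ω, rfl⟩ := List.exists_cons_of_length_eq_add_one hn
      rw [wordProd_cons, List.prod_nil, eq_comm, mul_eq_one_iff_eq_inv, ← wordProd_reverse] at hprod
      exact cs.simple_ne_wordProd (by simpa using (List.nodup_cons.mp hω).1) hprod
    obtain ⟨t, l', hred, hprod', -, hcl, hinv⟩ := h.exists_cons_isLeftInversion hl
    have ht : t * cs.wordProd ω = l'.prod := by
      rw [← hprod, ← hprod', List.prod_cons, ← mul_assoc, hinv.1.mul_self, one_mul]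
    rw [hprod] at hinv hprod'
    obtain ⟨j, hj, hjω⟩ := cs.exists_eraseIdx_of_isLeftInversion hinv
    have hih := ih hred.tail (hω.sublist (List.eraseIdx_sublist ω j)) (ht.symm.trans hjω)
      (by rw [List.length_eraseIdx_of_lt hj, hn, Nat.add_sub_cancel])
    rw [← hcl]
    have hmem (K : Subgroup W) (ω : List B) (hK : ∀ i ∈ ω, cs.simple i ∈ K) : cs.wordProd ω ∈ K :=
      K.list_prod_mem (by simpa using hK)
    have hmem_l {u : W} (hu : u ∈ l') :
        u ∈ Subgroup.closure {t | t ∈ (ω.eraseIdx j).map cs.simple} :=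
      hih ▸ Subgroup.subset_closure hu
    have herase {i : B} (hi : i ∈ ω.eraseIdx j) : cs.simple i ∈ Subgroup.closure {u | u ∈ l'} :=
      hih ▸ Subgroup.subset_closure (List.mem_map_of_mem hi)
    have hle : Subgroup.closure {t | t ∈ (ω.eraseIdx j).map cs.simple} ≤
        Subgroup.closure {t | t ∈ ω.map cs.simple} :=
      Subgroup.closure_mono fun u hu =>
        ((List.eraseIdx_sublist ω j).map cs.simple).subset hu
    have hle' : Subgroup.closure {u | u ∈ l'} ≤ Subgroup.closure {u | u ∈ t :: l'} :=
      Subgroup.closure_mono fun u hu => List.mem_cons_of_mem _ hu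
    apply le_antisymm
    · rw [Subgroup.closure_le]
      intro u hu
      rcases List.mem_cons.mp hu with rfl | hu
      · rw [eq_mul_inv_of_mul_eq hjω]
        exact Subgroup.mul_mem _ (hle (hmem _ _ fun i hi =>
          Subgroup.subset_closure (List.mem_map_of_mem hi))) (Subgroup.inv_mem _
            (hmem _ _ fun i hi => Subgroup.subset_closure (List.mem_map_of_mem hi)))
      · exact hle (hmem_l hu)
    · rw [Subgroup.closure_le]
      intro u hu
      obtain ⟨i, hi, rfl⟩ := List.mem_map.mp hu
      by_cases hie : i ∈ ω.eraseIdx j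
      · exact hle' (herase hie)
      · have hsplit : ω = ω.take j ++ ω[j] :: ω.drop (j + 1) := by simp
        rw [List.eraseIdx_eq_take_drop_succ, List.mem_append, not_or] at hie
        obtain rfl : i = ω[j] := by
          rw [hsplit, List.mem_append, List.mem_cons] at hi
          tauto
        have hω_mem : cs.wordProd ω ∈ Subgroup.closure {u | u ∈ t :: l'} :=
          hprod' ▸ Subgroup.list_prod_mem _ fun u hu => Subgroup.subset_closure hu
        rw [List.eraseIdx_eq_take_drop_succ] at herase
        have htake : cs.wordProd (ω.take j) ∈ Subgroup.closure {u | u ∈ t :: l'} :=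
          hmem _ _ fun i hi => hle' (herase (List.mem_append_left _ hi))
        have hdrop : cs.wordProd (ω.drop (j + 1)) ∈ Subgroup.closure {u | u ∈ t :: l'} :=
          hmem _ _ fun i hi => hle' (herase (List.mem_append_right _ hi))
        rwa [hsplit, wordProd_append, wordProd_cons, Subgroup.mul_mem_cancel_left _ htake,
          Subgroup.mul_mem_cancel_right _ hdrop] at hω_mem

end CoxeterSystem

/-- Let `(W,T)` be a dual Coxeter system of finite rank `m` (witnessed
by a Coxeter system `cs` indexed by `Fin m` with reflection set `T`), let
`c = s₁ ⋯ sₙ` be a parabolic Coxeter element, and let `W_c = ⟨t₁, …, tₙ⟩` for a reduced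
reflection factorization `c = t₁ ⋯ tₙ`.  Then `Red_T(c) = Red_{T'}(c)` where
`T' = W_c ∩ T`: every minimal-length factorization of `c` into reflections uses only
reflections lying in `W_c`. -/
theorem red_parabolic_coxeter_element_eq
    {W : Type*} [Group W] (T : Set W) (m n : ℕ) (hmn : n ≤ m)
    (M : CoxeterMatrix (Fin m)) (cs : CoxeterSystem M W)
    (hT : {t | cs.IsReflection t} = T)
    (c : W) (hc : c = (List.ofFn fun i : Fin n => cs.simple (Fin.castLE hmn i)).prod)
    (l₀ : List W) (hmem₀ : ∀ t ∈ l₀, t ∈ T) (hprod₀ : l₀.prod = c)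
    (hred₀ : l₀.length = reflLength cs c)
    (Wc : Subgroup W) (hWc : Wc = Subgroup.closure {t | t ∈ l₀})
    (T' : Set W) (hT' : T' = ↑Wc ∩ T) :
    Red T c = Red T' c := by
  have hmin (l : List W) (hl : ∀ t ∈ l, t ∈ T) (hprod : l.prod = c) : l₀.length ≤ l.length := by
    rw [hred₀]
    exact Nat.sInf_le ⟨l, by simpa [← hT] using hl, hprod, rfl⟩
  have hmem₀' : ∀ t ∈ l₀, t ∈ T' := fun t ht => by
    rw [hT', hWc]
    exact ⟨Subgroup.subset_closure ht, hmem₀ t ht⟩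
  have hcω : c = cs.wordProd (List.ofFn (Fin.castLE hmn)) := by
    rw [hc, CoxeterSystem.wordProd, List.map_ofFn]
    rfl
  have hnodup : (List.ofFn (Fin.castLE hmn)).Nodup :=
    List.nodup_ofFn.mpr (Fin.castLE_injective hmn)
  have hclosure {l : List W} (hl : l ∈ Red T c) :
      Subgroup.closure {t | t ∈ l} =
        Subgroup.closure {t | t ∈ (List.ofFn (Fin.castLE hmn)).map cs.simple} := by
    have hlc : l.prod = c := hl.2.1
    refine CoxeterSystem.IsReflectionReduced.closure_eq (cs := cs) ?_ hnodup (hlc.trans hcω)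
    rwa [CoxeterSystem.IsReflectionReduced, hT, hlc]
  ext l
  constructor
  · intro hl
    refine ⟨fun t ht => ?_, hl.2.1, fun l' hl' => hl.2.2 l' fun t ht => ?_⟩
    · rw [hT', hWc, hclosure ⟨hmem₀, hprod₀, hmin⟩, ← hclosure hl]
      exact ⟨Subgroup.subset_closure ht, hl.1 t ht⟩
    · have := hl' t ht
      rw [hT'] at this
      exact this.2
  · intro hl
    refine ⟨fun t ht => ?_, hl.2.1, fun l' hl' hprod => ?_⟩
    · have := hl.1 t ht
      rw [hT'] at this
      exact this.2
    · exact (hl.2.2 l₀ hmem₀' hprod₀).trans (hmin l' hl' hprod)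
end

section
/- Let (W,S) be a Coxeter system of finite rank with reflection set T and length function ℓ, let I ⊆ S, and let W_I = ⟨I⟩ be the corresponding standard parabolic subgroup with T_I = T ∩ W_I. Then for every w ∈ W_I, Red_T(w) = Red_{T_I}(w): every minimal-length factorization of w into reflections of W consists of reflections lying in W_I. -/
namespace CoxeterSystem

variable {W : Type*} [Group W] {B : Type*} {M : CoxeterMatrix B} (cs : CoxeterSystem M W)

/-! ### The reflection cocycle -/

open scoped Classical in
/-- The action of a simple reflection on signed elements of `W`: conjugate by `s i`, and flip the
sign of `s i` itself. -/
noncomputable def signedConj (i : B) : Function.End (W × ZMod 2) :=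
  fun p ↦ (cs.simple i * p.1 * cs.simple i, p.2 + if p.1 = cs.simple i then 1 else 0)

theorem simple_mul_mul_pow (i j : B) (n : ℕ) :
    cs.simple j * (cs.simple i * cs.simple j) ^ n =
      ((cs.simple i * cs.simple j) ^ n)⁻¹ * cs.simple j := by
  induction n with
  | zero => simp
  | succ n ih =>
    rw [pow_succ, ← mul_assoc, ih, ← pow_succ, pow_succ']
    simp [mul_assoc]

open scoped Classical in
theorem signedConj_mul_pow_apply (i j : B) (n : ℕ) (g : W) (e : ZMod 2) :
    ((cs.signedConj i * cs.signedConj j) ^ n) (g, e) =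
      ((cs.simple i * cs.simple j) ^ n * g * ((cs.simple i * cs.simple j) ^ n)⁻¹,
        e + ∑ k ∈ Finset.range (2 * n),
          if (cs.simple i * cs.simple j) ^ k * g = cs.simple j then 1 else 0) := by
  induction n with
  | zero => simp [Function.End.one_def]
  | succ n ih =>
    rw [pow_succ']
    change cs.signedConj i (cs.signedConj j (((cs.signedConj i * cs.signedConj j) ^ n) (g, e))) = _
    rw [ih]
    clear ih
    have key := cs.simple_mul_mul_pow i j
    have hai : (cs.simple i)⁻¹ = cs.simple i := cs.inv_simple i
    have hbi : (cs.simple j)⁻¹ = cs.simple j := cs.inv_simple j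
    simp only [signedConj]
    have h₁ : (cs.simple i * cs.simple j) ^ n * g * ((cs.simple i * cs.simple j) ^ n)⁻¹ =
          cs.simple j ↔ (cs.simple i * cs.simple j) ^ (2 * n) * g = cs.simple j := by
      rw [mul_inv_eq_iff_eq_mul, key, eq_inv_mul_iff_mul_eq, ← mul_assoc, ← pow_add, two_mul]
    have h₂ : cs.simple j * ((cs.simple i * cs.simple j) ^ n * g *
          ((cs.simple i * cs.simple j) ^ n)⁻¹) * cs.simple j = cs.simple i ↔
        (cs.simple i * cs.simple j) ^ (2 * n + 1) * g = cs.simple j := by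
      rw [← eq_mul_inv_iff_mul_eq, ← eq_inv_mul_iff_mul_eq, mul_inv_eq_iff_eq_mul, hbi,
        mul_assoc (cs.simple j), ← pow_succ', key, eq_inv_mul_iff_mul_eq, ← mul_assoc, ← pow_add]
      ring_nf
    refine Prod.ext ?_ ?_
    · simp only [pow_succ' (cs.simple i * cs.simple j) n, mul_inv_rev, hai, hbi, mul_assoc]
    · rw [show 2 * (n + 1) = 2 * n + 1 + 1 by ring, Finset.sum_range_succ, Finset.sum_range_succ]
      simp only [h₁, h₂, add_assoc]

theorem isLiftable_signedConj : M.IsLiftable cs.signedConj := by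
  classical
  intro i j
  funext ⟨g, e⟩
  rw [signedConj_mul_pow_apply, cs.simple_mul_simple_pow, two_mul, Finset.sum_range_add]
  simp only [pow_add, cs.simple_mul_simple_pow, one_mul, CharTwo.add_self_eq_zero, add_zero,
    inv_one, mul_one]
  rfl

/-- The action of `W` on signed elements of `W` extending `signedConj`. -/
noncomputable def signedConjHom : W →* Function.End (W × ZMod 2) :=
  cs.lift ⟨cs.signedConj, cs.isLiftable_signedConj⟩

/-- The sign picked up by `t` under the action of `w`. On reflections, it is the indicator function
of the right inversions of `w`. -/
noncomputable def reflectionCocycle (w t : W) : ZMod 2 := (cs.signedConjHom w (t, 0)).2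

theorem signedConjHom_apply (w g : W) (e : ZMod 2) :
    cs.signedConjHom w (g, e) = (w * g * w⁻¹, e + cs.reflectionCocycle w g) := by
  induction w using cs.simple_induction_left generalizing e with
  | one => simp [reflectionCocycle, Function.End.one_def]
  | mul_simple_left w i ih =>
    have h (e : ZMod 2) : cs.signedConjHom (cs.simple i * w) (g, e) =
        cs.signedConj i (w * g * w⁻¹, e + cs.reflectionCocycle w g) := by
      rw [map_mul, ← ih]
      simp only [signedConjHom, lift_apply_simple]
      rfl
    rw [reflectionCocycle, h, h]
    simp [signedConj, mul_assoc, add_assoc]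

theorem reflectionCocycle_mul (x y t : W) :
    cs.reflectionCocycle (x * y) t =
      cs.reflectionCocycle y t + cs.reflectionCocycle x (y * t * y⁻¹) := by
  have h : cs.signedConjHom (x * y) (t, 0) = cs.signedConjHom x (cs.signedConjHom y (t, 0)) := by
    rw [map_mul]; rfl
  rw [reflectionCocycle, h, signedConjHom_apply, signedConjHom_apply, zero_add]

@[simp]
theorem reflectionCocycle_one (t : W) : cs.reflectionCocycle 1 t = 0 := by
  simp [reflectionCocycle, Function.End.one_def]

open scoped Classical in
theorem reflectionCocycle_simple (i : B) (t : W) :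
    cs.reflectionCocycle (cs.simple i) t = if t = cs.simple i then 1 else 0 := by
  simp [reflectionCocycle, signedConjHom, signedConj]

theorem reflectionCocycle_self {t : W} (ht : cs.IsReflection t) :
    cs.reflectionCocycle t t = 1 := by
  obtain ⟨w, i, rfl⟩ := ht
  have h := cs.reflectionCocycle_mul w w⁻¹ (w * cs.simple i * w⁻¹)
  have e : w⁻¹ * (w * cs.simple i * w⁻¹) * w⁻¹⁻¹ = cs.simple i := by group
  rw [mul_inv_cancel, reflectionCocycle_one, e] at h
  rw [reflectionCocycle_mul, e, reflectionCocycle_mul, reflectionCocycle_simple, if_pos rfl,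
    mul_inv_cancel_right, add_left_comm, ← h, add_zero]

theorem mem_rightInvSeq_of_reflectionCocycle_ne_zero (ω : List B) {t : W}
    (h : cs.reflectionCocycle (cs.wordProd ω) t ≠ 0) : t ∈ cs.rightInvSeq ω := by
  classical
  induction ω with
  | nil => simp at h
  | cons i ω ih =>
    rw [wordProd_cons, reflectionCocycle_mul, reflectionCocycle_simple] at h
    rw [rightInvSeq, List.mem_cons]
    by_cases ht : cs.wordProd ω * t * (cs.wordProd ω)⁻¹ = cs.simple i
    · left
      rw [← ht]
      group
    · exact .inr (ih (by simpa [ht] using h))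

theorem isRightInversion_iff_reflectionCocycle {w t : W} (ht : cs.IsReflection t) :
    cs.IsRightInversion w t ↔ cs.reflectionCocycle w t = 1 := by
  have key (w : W) (h : cs.reflectionCocycle w t = 1) : cs.IsRightInversion w t := by
    obtain ⟨ω, hω, rfl⟩ := cs.exists_isReduced w
    exact cs.isRightInversion_of_mem_rightInvSeq hω
      (cs.mem_rightInvSeq_of_reflectionCocycle_ne_zero ω (by simp [h]))
  refine ⟨fun h ↦ ?_, key w⟩
  by_contra hw
  have hw : cs.reflectionCocycle w t = 0 := by
    generalize cs.reflectionCocycle w t = a at hw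
    revert hw
    decide +revert
  refine (ht.isRightInversion_mul_left_iff.mp (key (w * t) ?_)) h
  rw [reflectionCocycle_mul, mul_inv_cancel_right, hw, cs.reflectionCocycle_self ht, add_zero]

theorem isRightInversion_mul_iff {x y t : W} (ht : cs.IsReflection t) :
    cs.IsRightInversion (x * y) t ↔
      ¬(cs.IsRightInversion y t ↔ cs.IsRightInversion x (y * t * y⁻¹)) := by
  rw [cs.isRightInversion_iff_reflectionCocycle ht, cs.isRightInversion_iff_reflectionCocycle ht,
    cs.isRightInversion_iff_reflectionCocycle (ht.conj y), reflectionCocycle_mul]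
  generalize cs.reflectionCocycle y t = a
  generalize cs.reflectionCocycle x (y * t * y⁻¹) = b
  decide +revert

theorem isRightInversion_simple_iff {i : B} {t : W} :
    cs.IsRightInversion (cs.simple i) t ↔ t = cs.simple i := by
  refine ⟨fun ⟨_, h⟩ ↦ ?_, ?_⟩
  · rw [length_simple, Nat.lt_one_iff, length_eq_zero_iff] at h
    rw [← inv_simple, eq_inv_of_mul_eq_one_right h]
  · rintro rfl
    exact ⟨cs.isReflection_simple i, by simp⟩

theorem not_isRightInversion_one (t : W) : ¬cs.IsRightInversion 1 t := by
  rintro ⟨_, h⟩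
  simp at h

theorem isRightInversion_self {t : W} (ht : cs.IsReflection t) : cs.IsRightInversion t t :=
  (cs.isRightInversion_iff_reflectionCocycle ht).mpr (cs.reflectionCocycle_self ht)

/-- The right inversions of an element of a standard parabolic subgroup lie in that subgroup. -/
theorem IsRightInversion.mem_closure_simple {I : Set B} {w t : W}
    (h : cs.IsRightInversion w t) (hw : w ∈ Subgroup.closure (cs.simple '' I)) :
    t ∈ Subgroup.closure (cs.simple '' I) := by
  have ht := h.1
  induction hw using Subgroup.closure_induction generalizing t with
  | mem x hx =>
    obtain ⟨i, hi, rfl⟩ := hx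
    rw [isRightInversion_simple_iff] at h
    exact h ▸ Subgroup.subset_closure ⟨i, hi, rfl⟩
  | one => exact (cs.not_isRightInversion_one t h).elim
  | mul x y hx hy ihx ihy =>
    rw [cs.isRightInversion_mul_iff ht] at h
    by_cases h' : cs.IsRightInversion y t
    · exact ihy h' ht
    · have := ihx (by tauto) (ht.conj y)
      simpa [mul_assoc] using mul_mem (mul_mem (inv_mem hy) this) hy
  | inv x hx ih =>
    have h' := cs.isRightInversion_mul_iff (x := x) (y := x⁻¹) ht
    rw [mul_inv_cancel] at h'
    have := ih (t := x⁻¹ * t * x⁻¹⁻¹) (by have := cs.not_isRightInversion_one t; tauto) (ht.conj x⁻¹)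
    simpa [mul_assoc] using mul_mem (mul_mem hx this) (inv_mem hx)

/-! ### Canonical reflections of a subgroup -/

/-- The canonical reflections of a subgroup `D` of `W`: those whose only right inversion in `D` is
themselves. -/
def canonicalReflections (D : Subgroup W) : Set W :=
  {r | r ∈ D ∧ cs.IsReflection r ∧ ∀ q ∈ D, cs.IsRightInversion r q → q = r}

theorem conj_mem_canonicalReflections {D : Subgroup W} {i : B} (hi : cs.simple i ∉ D) {r : W}
    (hr : r ∈ cs.canonicalReflections (D.comap (MulAut.conj (cs.simple i)).toMonoidHom)) :
    cs.simple i * r * cs.simple i ∈ cs.canonicalReflections D := by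
  obtain ⟨hrD, hr, hrinv⟩ := hr
  simp only [Subgroup.mem_comap, MulEquiv.coe_toMonoidHom, MulAut.conj_apply] at hrD hrinv
  rw [inv_simple] at hrD hrinv
  refine ⟨hrD, by simpa using hr.conj (cs.simple i), fun q hq hinv ↦ ?_⟩
  have hqr := hinv.1
  have hqs : ¬cs.IsRightInversion (cs.simple i) q := by
    rw [isRightInversion_simple_iff]
    rintro rfl
    exact hi hq
  have hq' : cs.IsRightInversion (cs.simple i * r) (cs.simple i * q * (cs.simple i)⁻¹) := by
    have := cs.isRightInversion_mul_iff (x := cs.simple i * r) (y := cs.simple i) hqr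
    tauto
  have hs : ¬cs.IsRightInversion (cs.simple i)
      (r * (cs.simple i * q * (cs.simple i)⁻¹) * r⁻¹) := by
    rw [isRightInversion_simple_iff]
    intro h
    apply hi
    have e : cs.simple i =
        (cs.simple i * r * cs.simple i) * q * (cs.simple i * r * cs.simple i)⁻¹ := by
      calc cs.simple i = cs.simple i * cs.simple i * (cs.simple i)⁻¹ := by group
        _ = cs.simple i * (r * (cs.simple i * q * (cs.simple i)⁻¹) * r⁻¹) * (cs.simple i)⁻¹ := by
          rw [h]
        _ = _ := by simp [mul_assoc]
    rw [e]
    exact mul_mem (mul_mem hrD hq) (inv_mem hrD)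
  have hr' : cs.IsRightInversion r (cs.simple i * q * (cs.simple i)⁻¹) := by
    have := cs.isRightInversion_mul_iff (x := cs.simple i) (y := r) (hqr.conj (cs.simple i))
    tauto
  rw [inv_simple] at hr'
  rw [← hrinv _ (by simpa [mul_assoc] using hq) hr']
  simp [mul_assoc]

theorem IsReflection.mem_closure_canonicalReflections {D : Subgroup W} {t : W}
    (ht : cs.IsReflection t) (htD : t ∈ D) :
    t ∈ Subgroup.closure (cs.canonicalReflections D) := by
  obtain ⟨w, j, rfl⟩ := ht
  have simple_mem {D : Subgroup W} {i : B} (hi : cs.simple i ∈ D) :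
      cs.simple i ∈ Subgroup.closure (cs.canonicalReflections D) :=
    Subgroup.subset_closure ⟨hi, cs.isReflection_simple i,
      fun q _ hq ↦ cs.isRightInversion_simple_iff.mp hq⟩
  induction w using cs.simple_induction_left generalizing D with
  | one => simpa using simple_mem (by simpa using htD)
  | mul_simple_left w i ih =>
    have e : cs.simple i * w * cs.simple j * (cs.simple i * w)⁻¹ =
        cs.simple i * (w * cs.simple j * w⁻¹) * (cs.simple i)⁻¹ := by group
    rw [e] at htD ⊢
    by_cases hi : cs.simple i ∈ D
    · have h : w * cs.simple j * w⁻¹ ∈ D := by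
        simpa [mul_assoc] using mul_mem (mul_mem (inv_mem hi) htD) hi
      exact mul_mem (mul_mem (simple_mem hi) (ih h)) (inv_mem (simple_mem hi))
    · have h := ih (D := D.comap (MulAut.conj (cs.simple i)).toMonoidHom) (by simpa using htD)
      have hle : Subgroup.closure (cs.canonicalReflections
          (D.comap (MulAut.conj (cs.simple i)).toMonoidHom)) ≤
          (Subgroup.closure (cs.canonicalReflections D)).comap
            (MulAut.conj (cs.simple i)).toMonoidHom := by
        rw [Subgroup.closure_le]
        intro r hr
        simpa using Subgroup.subset_closure (cs.conj_mem_canonicalReflections hi hr)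
      simpa using hle h

/-! ### Dihedral reflection subgroups -/

/-- The elements of odd length of a dihedral reflection subgroup are reflections. -/
theorem isReflection_of_mem_closure_pair {t₁ t₂ d : W} (h₁ : cs.IsReflection t₁)
    (h₂ : cs.IsReflection t₂) (hd : d ∈ Subgroup.closure {t₁, t₂}) (hodd : cs.length d % 2 = 1) :
    cs.IsReflection d := by
  have hcase : (∃ k : ℤ, d = (t₁ * t₂) ^ k) ∨ ∃ k : ℤ, d = t₁ * (t₁ * t₂) ^ k := by
    clear hodd
    have mul_mem_case (x : W) (hx : x ∈ ({t₁, t₂} : Set W)) (y : W)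
        (hy : (∃ k : ℤ, y = (t₁ * t₂) ^ k) ∨ ∃ k : ℤ, y = t₁ * (t₁ * t₂) ^ k) :
        (∃ k : ℤ, x * y = (t₁ * t₂) ^ k) ∨ ∃ k : ℤ, x * y = t₁ * (t₁ * t₂) ^ k := by
      rcases hx with rfl | rfl <;> rcases hy with ⟨k, rfl⟩ | ⟨k, rfl⟩
      · exact .inr ⟨k, rfl⟩
      · exact .inl ⟨k, by rw [← mul_assoc, h₁.mul_self, one_mul]⟩
      · refine .inr ⟨1 + k, ?_⟩
        rw [zpow_add, zpow_one, ← mul_assoc, ← mul_assoc, h₁.mul_self, one_mul]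
      · refine .inl ⟨-1 + k, ?_⟩
        rw [zpow_add, zpow_neg_one, mul_inv_rev, h₁.inv, h₂.inv, mul_assoc]
    induction hd using Subgroup.closure_induction_left with
    | one => exact .inl ⟨0, by simp⟩
    | mul_left x hx y _ ih => exact mul_mem_case x hx y ih
    | inv_mul_cancel x hx y _ ih =>
      have hxr : cs.IsReflection x := by rcases hx with rfl | rfl <;> assumption
      rw [hxr.inv]
      exact mul_mem_case x hx y ih
  have parity := cs.length_mul_mod_two
  have o₁ := Nat.odd_iff.mp h₁.odd_length
  have o₂ := Nat.odd_iff.mp h₂.odd_length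
  rcases hcase with ⟨k, rfl⟩ | ⟨k, rfl⟩
  · have : (t₁ * t₂) ^ k ∈ cs.lengthParity.ker := by
      apply zpow_mem
      rw [MonoidHom.mem_ker, lengthParity_eq_ofAdd_length, ofAdd_eq_one, ZMod.natCast_eq_zero_iff]
      have := parity t₁ t₂
      omega
    rw [MonoidHom.mem_ker, lengthParity_eq_ofAdd_length, ofAdd_eq_one, ZMod.natCast_eq_zero_iff]
      at this
    omega
  · have comm (j : ℤ) : t₁ * (t₁ * t₂) ^ j = (t₁ * t₂) ^ (-j) * t₁ := by
      have hc : t₁ * (t₁ * t₂) * t₁⁻¹ = (t₁ * t₂)⁻¹ := by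
        rw [← mul_assoc, h₁.mul_self, one_mul, mul_inv_rev, h₂.inv]
      rw [zpow_neg, ← inv_zpow, ← hc, conj_zpow]
      group
    rcases Int.even_or_odd' k with ⟨j, rfl | rfl⟩
    · have e : t₁ * (t₁ * t₂) ^ (2 * j) = (t₁ * t₂) ^ (-j) * t₁ * ((t₁ * t₂) ^ (-j))⁻¹ := by
        rw [two_mul, zpow_add, ← mul_assoc, comm, zpow_neg, inv_inv]
      exact e ▸ h₁.conj _
    · have e : t₁ * (t₁ * t₂) ^ (2 * j + 1) =
          (t₁ * t₂) ^ (-j) * t₂ * ((t₁ * t₂) ^ (-j))⁻¹ := by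
        rw [show 2 * j + 1 = j + (1 + j) by ring, zpow_add, ← mul_assoc, comm, zpow_neg, inv_inv,
          zpow_add, zpow_one, ← mul_assoc, mul_assoc _ t₁, ← mul_assoc t₁ t₁, h₁.mul_self, one_mul]
      exact e ▸ h₂.conj _

theorem eq_one_of_not_isRightInversion_mul {t₁ t₂ g r : W} (h₁ : cs.IsReflection t₁)
    (h₂ : cs.IsReflection t₂) (hg : g ∈ Subgroup.closure {t₁, t₂}) (heven : cs.length g % 2 = 0)
    (hr : r ∈ cs.canonicalReflections (Subgroup.closure {t₁, t₂}))
    (h : ¬cs.IsRightInversion g (r * g)) : g = 1 := by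
  obtain ⟨hrD, hr, hrinv⟩ := hr
  have hq : cs.IsReflection (r * g) := by
    refine cs.isReflection_of_mem_closure_pair h₁ h₂ (mul_mem hrD hg) ?_
    have := cs.length_mul_mod_two r g
    have := Nat.odd_iff.mp hr.odd_length
    omega
  have hinv : cs.IsRightInversion r (g * (r * g) * g⁻¹) := by
    have := (cs.isRightInversion_mul_iff hq).mp (cs.isRightInversion_self hq)
    tauto
  simpa [mul_assoc] using hrinv _ (mul_mem (mul_mem hg (mul_mem hrD hg)) (inv_mem hg)) hinv

theorem mem_of_mul_mem_closure_simple {I : Set B} {t₁ t₂ : W} (h₁ : cs.IsReflection t₁)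
    (h₂ : cs.IsReflection t₂) (hne : t₁ ≠ t₂)
    (hmem : t₁ * t₂ ∈ Subgroup.closure (cs.simple '' I)) :
    t₁ ∈ Subgroup.closure (cs.simple '' I) := by
  have m₁ : t₁ ∈ Subgroup.closure {t₁, t₂} := Subgroup.subset_closure (by simp)
  have m₂ : t₂ ∈ Subgroup.closure {t₁, t₂} := Subgroup.subset_closure (by simp)
  have hle : Subgroup.closure (cs.canonicalReflections (Subgroup.closure {t₁, t₂})) ≤
      Subgroup.closure (cs.simple '' I) := by
    rw [Subgroup.closure_le]
    intro r hr
    by_contra hrI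
    refine hne (eq_inv_of_mul_eq_one_left (cs.eq_one_of_not_isRightInversion_mul h₁ h₂
      (mul_mem m₁ m₂) ?_ hr fun h ↦ hrI ?_) |>.trans h₂.inv)
    · have := cs.length_mul_mod_two t₁ t₂
      have := Nat.odd_iff.mp h₁.odd_length
      have := Nat.odd_iff.mp h₂.odd_length
      omega
    · exact (mul_mem_cancel_right hmem).mp (h.mem_closure_simple cs hmem)
  exact hle (h₁.mem_closure_canonicalReflections cs m₁)

/-- A peak `z * t₁ < z > z * t₂` can be replaced by a valley. -/
theorem exists_length_mul_lt_of_peak {t₁ t₂ z : W} (h₁ : cs.IsRightInversion z t₁)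
    (h₂ : cs.IsRightInversion z t₂) (hne : t₁ ≠ t₂) :
    ∃ g ∈ Subgroup.closure {t₁, t₂}, cs.length g % 2 = 0 ∧
      cs.length (z * g) < cs.length z := by
  have m₁ : t₁ ∈ Subgroup.closure {t₁, t₂} := Subgroup.subset_closure (by simp)
  have m₂ : t₂ ∈ Subgroup.closure {t₁, t₂} := Subgroup.subset_closure (by simp)
  have o₁ := Nat.odd_iff.mp h₁.1.odd_length
  have o₂ := Nat.odd_iff.mp h₂.1.odd_length
  have parity := cs.length_mul_mod_two
  by_contra! hz
  have hmin (d : W) (hd : d ∈ Subgroup.closure {t₁, t₂}) (hdz : cs.IsRightInversion z d) (q : W)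
      (hq : q ∈ Subgroup.closure {t₁, t₂}) : ¬cs.IsRightInversion (z * d) q := by
    rintro ⟨hqr, hlt⟩
    have hle := hz (d * q) (mul_mem hd hq) (by
      have := parity d q
      have := Nat.odd_iff.mp hdz.1.odd_length
      have := Nat.odd_iff.mp hqr.odd_length
      omega)
    rw [← mul_assoc] at hle
    exact absurd (hdz.2.trans_le hle) hlt.not_gt
  obtain ⟨r, hr⟩ : (cs.canonicalReflections (Subgroup.closure {t₁, t₂})).Nonempty := by
    rw [Set.nonempty_iff_ne_empty]
    intro h
    have ht₁ := h₁.1.mem_closure_canonicalReflections cs m₁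
    rw [h, Subgroup.closure_empty, Subgroup.mem_bot] at ht₁
    simp [ht₁] at o₁
  have hg : t₁ * t₂ ∈ Subgroup.closure {t₁, t₂} := mul_mem m₁ m₂
  refine hne ((eq_inv_of_mul_eq_one_left <| cs.eq_one_of_not_isRightInversion_mul h₁.1 h₂.1 hg
    (by have := parity t₁ t₂; omega) hr fun hinv ↦ ?_).trans h₂.1.inv)
  have hmul := cs.isRightInversion_mul_iff (x := z * t₁) (y := t₁ * t₂) hinv.1
  rw [← mul_assoc, mul_assoc z t₁ t₁, h₁.1.mul_self, mul_one] at hmul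
  have n₂ := hmin t₂ m₂ h₂ _ (mul_mem hr.1 hg)
  have n₁ := hmin t₁ m₁ h₁ _ (mul_mem (mul_mem hg (mul_mem hr.1 hg)) (inv_mem hg))
  tauto

/-! ### Reflection factorizations -/

/-- The total length of the partial products of `l`, each multiplied on the left by `x`. -/
noncomputable def pathLength : W → List W → ℕ
  | _, [] => 0
  | x, t :: l => cs.length (x * t) + pathLength (x * t) l

theorem pathLength_append (x : W) (l l' : List W) :
    cs.pathLength x (l ++ l') = cs.pathLength x l + cs.pathLength (x * l.prod) l' := by
  induction l generalizing x with
  | nil => simp [pathLength]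
  | cons t l ih => simp [pathLength, ih, add_assoc, mul_assoc]

/-- Either the partial products of a list of reflections increase in length, in which case the
factors lie in every standard parabolic subgroup containing the product, or there is a peak. -/
theorem forall_mem_closure_simple_or_exists_peak (l : List W) (hl : ∀ t ∈ l, cs.IsReflection t) :
    (cs.length l.dropLast.prod ≤ cs.length l.prod ∧
      ∀ I : Set B, l.prod ∈ Subgroup.closure (cs.simple '' I) →
        ∀ t ∈ l, t ∈ Subgroup.closure (cs.simple '' I)) ∨
    ∃ l₁ t₁ t₂ l₂, l = l₁ ++ t₁ :: t₂ :: l₂ ∧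
      cs.length l₁.prod < cs.length (l₁.prod * t₁) ∧
      cs.length (l₁.prod * t₁ * t₂) < cs.length (l₁.prod * t₁) := by
  induction l using List.reverseRecOn with
  | nil => simp
  | append_singleton l t ih =>
    have ht : cs.IsReflection t := hl t (by simp)
    rcases ih fun u hu ↦ hl u (by simp [hu]) with ⟨hlen, hmem⟩ | ⟨l₁, t₁, t₂, l₂, rfl, h⟩
    · simp only [List.dropLast_concat, List.prod_append, List.prod_singleton]
      rcases lt_or_gt_of_ne (ht.length_mul_left_ne l.prod) with hlt | hgt
      · right
        rcases List.eq_nil_or_concat l with rfl | ⟨l₀, t₀, rfl⟩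
        · simp at hlt
        · refine ⟨l₀, t₀, t, [], by simp, ?_, by simpa using hlt⟩
          have ht₀ := hl t₀ (by simp)
          have := ht₀.length_mul_left_ne l₀.prod
          simp at hlen
          omega
      · refine .inl ⟨hgt.le, fun I hI u hu ↦ ?_⟩
        have htI : t ∈ Subgroup.closure (cs.simple '' I) := by
          refine IsRightInversion.mem_closure_simple cs ⟨ht, ?_⟩ hI
          rwa [mul_assoc, ht.mul_self, mul_one]
        rcases List.mem_append.mp hu with hu | hu
        · exact hmem I ((mul_mem_cancel_right htI).mp hI) u hu
        · exact List.mem_singleton.mp hu ▸ htI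
    · exact .inr ⟨l₁, t₁, t₂, l₂ ++ [t], by simp, h⟩

/-- Every factor of a shortest reflection factorization of an element of a standard parabolic
subgroup lies in that subgroup. -/
theorem mem_closure_simple_of_mem_red {I : Set B} {w : W}
    (hw : w ∈ Subgroup.closure (cs.simple '' I)) {l : List W}
    (hl : l ∈ Red {t | cs.IsReflection t} w) {t : W} (ht : t ∈ l) :
    t ∈ Subgroup.closure (cs.simple '' I) := by
  induction hn : cs.pathLength 1 l using Nat.strong_induction_on generalizing l t with
  | _ n ih =>
  subst hn
  obtain ⟨hrefl, rfl, hmin⟩ := hl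
  rcases cs.forall_mem_closure_simple_or_exists_peak l hrefl with
    ⟨-, h⟩ | ⟨l₁, t₁, t₂, l₂, rfl, hup, hdown⟩
  · exact h I hw t ht
  have h₁ : cs.IsReflection t₁ := hrefl t₁ (by simp)
  have h₂ : cs.IsReflection t₂ := hrefl t₂ (by simp)
  have hne : t₁ ≠ t₂ := by
    rintro rfl
    have := hmin (l₁ ++ l₂) (fun u hu ↦ hrefl u (by simp at hu ⊢; tauto))
      (by simp [← mul_assoc t₁ t₁, h₁.mul_self])
    simp at this
  obtain ⟨g, hg, heven, hlt⟩ := cs.exists_length_mul_lt_of_peak (z := l₁.prod * t₁)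
    ⟨h₁, by rwa [mul_assoc, h₁.mul_self, mul_one]⟩ ⟨h₂, hdown⟩ hne
  have m₁ : t₁ ∈ Subgroup.closure {t₁, t₂} := Subgroup.subset_closure (by simp)
  have m₂ : t₂ ∈ Subgroup.closure {t₁, t₂} := Subgroup.subset_closure (by simp)
  have k₁ : cs.IsReflection (t₁ * g) := by
    refine cs.isReflection_of_mem_closure_pair h₁ h₂ (mul_mem m₁ hg) ?_
    have := cs.length_mul_mod_two t₁ g
    have := Nat.odd_iff.mp h₁.odd_length
    omega
  have k₂ : cs.IsReflection (g⁻¹ * t₂) := by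
    refine cs.isReflection_of_mem_closure_pair h₁ h₂ (mul_mem (inv_mem hg) m₂) ?_
    have := cs.length_mul_mod_two g⁻¹ t₂
    have := Nat.odd_iff.mp h₂.odd_length
    rw [length_inv] at *
    omega
  have hmem {u : W} (hu : u ∈ l₁ ++ t₁ * g :: g⁻¹ * t₂ :: l₂) :
      u ∈ Subgroup.closure (cs.simple '' I) := by
    refine ih _ ?_ (l := l₁ ++ t₁ * g :: g⁻¹ * t₂ :: l₂) ⟨?_, ?_, ?_⟩ hu rfl
    · have e : l₁.prod * (t₁ * g) * (g⁻¹ * t₂) = l₁.prod * t₁ * t₂ := by group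
      simp only [pathLength_append, pathLength, one_mul, e]
      rw [← mul_assoc l₁.prod t₁ g]
      omega
    · intro v hv
      simp only [List.mem_append, List.mem_cons] at hv
      rcases hv with hv | rfl | rfl | hv
      · exact hrefl v (by simp [hv])
      · exact k₁
      · exact k₂
      · exact hrefl v (by simp [hv])
    · simp [mul_assoc]
    · intro l' h h'
      simpa using hmin l' h h'
  have hprod : t₁ * t₂ ∈ Subgroup.closure (cs.simple '' I) := by
    have e : t₁ * t₂ = (t₁ * g) * (g⁻¹ * t₂) := by group
    exact e ▸ mul_mem (hmem (by simp)) (hmem (by simp))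
  have ht₁ := cs.mem_of_mul_mem_closure_simple h₁ h₂ hne hprod
  simp only [List.mem_append, List.mem_cons] at ht
  rcases ht with ht | rfl | rfl | ht
  · exact hmem (by simp [ht])
  · exact ht₁
  · exact (mul_mem_cancel_left ht₁).mp hprod
  · exact hmem (by simp [ht])

end CoxeterSystem


/-- Let `(W,S)` be a Coxeter system of finite rank with reflection set
`T`, let `I ⊆ S`, and let `W_I = ⟨I⟩` be the corresponding standard parabolic subgroup,
with `T_I = T ∩ W_I`.  Then for every `w ∈ W_I` one has `Red_T(w) = Red_{T_I}(w)`: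
every minimal-length factorization of `w` into reflections of `W` consists of
reflections lying in `W_I`. -/
theorem red_eq_red_standard_parabolic
    {W : Type*} [Group W] {B : Type*} [Finite B]
    (M : CoxeterMatrix B) (cs : CoxeterSystem M W)
    (T : Set W) (hT : T = {t | cs.IsReflection t})
    (I : Set B)
    (WI : Subgroup W) (hWI : WI = Subgroup.closure (cs.simple '' I))
    (TI : Set W) (hTI : TI = T ∩ ↑WI)
    (w : W) (hw : w ∈ WI) :
    Red T w = Red TI w := by
  subst hT hWI hTI
  have hred {l : List W} (hl : l ∈ Red {t | cs.IsReflection t} w) :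
      ∀ t ∈ l, t ∈ {t | cs.IsReflection t} ∩ ↑(Subgroup.closure (cs.simple '' I)) :=
    fun t ht ↦ ⟨hl.1 t ht, cs.mem_closure_simple_of_mem_red hw hl ht⟩
  ext l
  refine ⟨fun hl ↦ ⟨hred hl, hl.2.1, fun l' h ↦ hl.2.2 l' fun t ht ↦ (h t ht).1⟩,
    fun ⟨hl, hprod, hmin⟩ ↦ ⟨fun t ht ↦ (hl t ht).1, hprod, fun l' h h' ↦ ?_⟩⟩
  obtain ⟨l₀, ⟨h₀, hprod₀⟩, hmin₀⟩ := (measure List.length).wf.has_min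
    {l : List W | (∀ t ∈ l, cs.IsReflection t) ∧ l.prod = w} ⟨l', h, h'⟩
  have hl₀ : l₀ ∈ Red {t | cs.IsReflection t} w :=
    ⟨h₀, hprod₀, fun l'' h h' ↦ not_lt.mp (hmin₀ l'' ⟨h, h'⟩)⟩
  exact (hmin l₀ (hred hl₀) hprod₀).trans (hl₀.2.2 l' h h')
end
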